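/- arXiv:math/0504600 — 6 statements merged into one kernel-verified Lean document; each statement's English description precedes it below -/
import Mathlib

section
/- For every k ∈ ℝ, there exists a nonconstant polynomial f ∈ ℝ[X] with T(f) = 0 if and only if k = −1/2 − m for some integer m ≥ 0 (i.e. k ∈ −1/2 + ℤ_{≤0}). -/
/-! The operator `T` is diagonal on monomials up to a degree shift: it sends `X ^ (n + 1)` to
`((n + 1) + k * (1 - (-1) ^ (n + 1))) • X ^ n` (`coeff_dunklT`). Hence a nonconstant polynomial is
killed by `T` only if one of these factors vanishes, namely the one of its leading term. For `n + 1`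
even the factor is `n + 1 ≠ 0`; for `n + 1 = 2 * m + 1` it is `2 * m + 1 + 2 * k`, which vanishes
exactly when `k = -1/2 - m`, and then `X ^ (2 * m + 1)` is in the kernel. -/

open Polynomial

/-- The one-variable Dunkl operator on real polynomials:
`T f = f' + k ⬝ g` where `g` is the unique polynomial with `X * g = f(X) - f(-X)`. -/
noncomputable def dunklT (k : ℝ) (f : Polynomial ℝ) : Polynomial ℝ :=
  derivative f + C k * ((f - f.comp (-X)) /ₘ X)

theorem coeff_dunklT (k : ℝ) (f : Polynomial ℝ) (n : ℕ) :
    (dunklT k f).coeff n =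
      f.coeff (n + 1) * (((n : ℝ) + 1) + k * (1 - (-1) ^ (n + 1))) := by
  have hdiv (p : Polynomial ℝ) : (p /ₘ X).coeff n = p.coeff (n + 1) := by
    simpa using coeff_divByMonic_X_sub_C_rec p 0 n
  have hcomp : (f.comp (-X)).coeff (n + 1) = f.coeff (n + 1) * (-1) ^ (n + 1) := by
    have hX : (-X : Polynomial ℝ) = C (-1) * X := by simp
    rw [hX, comp_C_mul_X_coeff]
  rw [dunklT, coeff_add, coeff_C_mul, coeff_derivative, hdiv, coeff_sub, hcomp]
  ring

/-- There exists a nonconstant real polynomial killed by the one-variable Dunkl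
operator `T` if and only if `k ∈ -1/2 + ℤ_{≤ 0}`. -/
theorem dunkl_kernel_nonconstant_iff (k : ℝ) :
    (∃ f : Polynomial ℝ, f.natDegree ≠ 0 ∧ dunklT k f = 0) ↔
      ∃ m : ℕ, k = -(1/2 : ℝ) - (m : ℝ) := by
  constructor
  · rintro ⟨f, hdeg, hT⟩
    obtain ⟨n, hn⟩ := Nat.exists_eq_succ_of_ne_zero hdeg
    have hlead : f.coeff (n + 1) ≠ 0 := by
      have hf : f ≠ 0 := by
        rintro rfl
        simp at hdeg
      have h := leadingCoeff_ne_zero.mpr hf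
      rwa [leadingCoeff, hn] at h
    have hfactor := coeff_dunklT k f n
    rw [hT, coeff_zero] at hfactor
    have hzero := (mul_eq_zero.mp hfactor.symm).resolve_left hlead
    rcases Nat.even_or_odd (n + 1) with heven | hodd
    · rw [heven.neg_one_pow] at hzero
      have : (0 : ℝ) ≤ n := n.cast_nonneg
      linarith
    · rw [hodd.neg_one_pow] at hzero
      obtain ⟨m, hm⟩ := hodd
      have hm' : (n : ℝ) + 1 = 2 * m + 1 := by exact_mod_cast hm
      exact ⟨m, by linarith⟩
  · rintro ⟨m, rfl⟩
    refine ⟨X ^ (2 * m + 1), by simp, ?_⟩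
    ext n
    rw [coeff_dunklT, coeff_X_pow, coeff_zero]
    split_ifs with h
    · have hn : n = 2 * m := by omega
      subst hn
      rw [(odd_two_mul_add_one m).neg_one_pow]
      push_cast
      ring
    · simp
end

section
/- Let k > 0 be real. For every polynomial f ∈ ℝ[X] and every x ∈ ℝ with x ≠ 0, the function χ(f) is differentiable at x and (χ(f))'(x) + k·(χ(f)(x) − χ(f)(−x))/x = χ(f')(x); that is, T ∘ χ = χ ∘ d/dx on polynomial functions. -/
/-!
Write `g(t) = (1-t)^(k-1) (1+t)^(k-1)`, an even integrable function on `[-1, 1]`, and let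
`Gₙ = ∫ tⁿ g`. The weight of `χ` is `(1+t) g(t)`, so its `n`-th moment is `mₙ = Gₙ + Gₙ₊₁`, and
without the factor `α` the operator `χ` sends `Xⁿ` to `mₙ xⁿ`. By linearity the theorem reduces to
the recurrence `n mₙ + k (1 - (-1)ⁿ) mₙ = n mₙ₋₁` (`dunklMoment_recurrence`). It follows from two
facts: odd moments of `g` vanish by parity (`jacobiMoment_odd`), and integrating the derivative of
`tⁿ (1-t)^k (1+t)^k`, which vanishes at `±1`, gives `n (Gₙ₋₁ - Gₙ₊₁) = 2k Gₙ₊₁`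
(`jacobiMoment_recurrence`).
-/

open Polynomial intervalIntegral

/-- The normalizing constant `α = (∫_{-1}^{1} (1-t)^(k-1) (1+t)^k dt)⁻¹`. -/
noncomputable def dunklAlpha (k : ℝ) : ℝ :=
  (∫ t in (-1 : ℝ)..1, (1 - t) ^ (k - 1) * (1 + t) ^ k)⁻¹

/-- The intertwining operator `χ(f)(x) = α ∫_{-1}^{1} f(xt) (1-t)^(k-1) (1+t)^k dt`. -/
noncomputable def dunklChi (k : ℝ) (f : ℝ → ℝ) (x : ℝ) : ℝ :=
  dunklAlpha k * ∫ t in (-1 : ℝ)..1, f (x * t) * (1 - t) ^ (k - 1) * (1 + t) ^ k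

open MeasureTheory

/-- The symmetric Jacobi weight `(1-t)^(k-1) (1+t)^(k-1)`. -/
noncomputable def jacobiWeight (k t : ℝ) : ℝ := (1 - t) ^ (k - 1) * (1 + t) ^ (k - 1)

/-- The `n`-th moment on `[-1, 1]` of the symmetric Jacobi weight. -/
noncomputable def jacobiMoment (k : ℝ) (n : ℕ) : ℝ :=
  ∫ t in (-1 : ℝ)..1, t ^ n * jacobiWeight k t

/-- The integral in `χ(f)(x)` for a polynomial `f`, without the normalizing constant. -/
noncomputable def dunklInt (k : ℝ) (f : Polynomial ℝ) (x : ℝ) : ℝ :=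
  ∫ t in (-1 : ℝ)..1, f.eval (x * t) * (1 - t) ^ (k - 1) * (1 + t) ^ k

lemma jacobiWeight_neg (k t : ℝ) : jacobiWeight k (-t) = jacobiWeight k t := by
  unfold jacobiWeight
  rw [mul_comm, sub_neg_eq_add, ← sub_eq_add_neg]

/-- The endpoint `s = 0` is covered because `0 ^ k = 0` for `k ≠ 0`. -/
lemma rpow_eq_rpow_sub_one_mul {k s : ℝ} (hk : 0 < k) (hs : 0 ≤ s) :
    s ^ k = s ^ (k - 1) * s := by
  rcases hs.eq_or_lt with rfl | hs
  · simp [Real.zero_rpow hk.ne']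
  · rw [Real.rpow_sub_one hs.ne']
    field_simp

lemma jacobiWeight_intervalIntegrable {k : ℝ} (hk : 0 < k) :
    IntervalIntegrable (jacobiWeight k) volume (-1) 1 := by
  -- On `[-1, 0]` only the factor `(1+t)^(k-1)` can be singular; `[0, 1]` follows by symmetry.
  have h1 : IntervalIntegrable (jacobiWeight k) volume (-1) 0 := by
    have h : IntervalIntegrable (fun t : ℝ => (1 + t) ^ (k - 1)) volume (-1) 0 := by
      have h0 : IntervalIntegrable (fun t : ℝ => t ^ (k - 1)) volume 0 1 :=
        intervalIntegrable_rpow' (by linarith)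
      simpa using h0.comp_add_left 1
    refine h.continuousOn_mul ?_
    rw [Set.uIcc_of_le (by norm_num)]
    refine ContinuousOn.rpow_const (by fun_prop) ?_
    intro t ht
    left
    have := ht.2
    linarith
  have h2 : IntervalIntegrable (jacobiWeight k) volume 0 1 := by
    have h := (IntervalIntegrable.iff_comp_neg (by simp)).mp h1
    simp only [jacobiWeight_neg, neg_neg, neg_zero] at h
    exact h.symm
  exact h1.trans h2

lemma pow_mul_jacobiWeight_intervalIntegrable {k : ℝ} (hk : 0 < k) (n : ℕ) :
    IntervalIntegrable (fun t : ℝ => t ^ n * jacobiWeight k t) volume (-1) 1 :=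
  (jacobiWeight_intervalIntegrable hk).continuousOn_mul (by fun_prop)

lemma jacobiMoment_odd (k : ℝ) {n : ℕ} (hn : Odd n) : jacobiMoment k n = 0 := by
  have h := intervalIntegral.integral_comp_neg (a := -1) (b := 1)
    (fun t : ℝ => t ^ n * jacobiWeight k t)
  simp only [jacobiWeight_neg, hn.neg_pow, neg_mul, neg_neg,
    intervalIntegral.integral_neg] at h
  unfold jacobiMoment
  linarith

/-- The fundamental theorem of calculus for `t^(n+1) (1-t)^k (1+t)^k`, which vanishes at `±1`. -/
lemma jacobiMoment_recurrence {k : ℝ} (hk : 0 < k) (n : ℕ) :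
    (n + 1) * (jacobiMoment k n - jacobiMoment k (n + 2)) = 2 * k * jacobiMoment k (n + 2) := by
  have hI := pow_mul_jacobiWeight_intervalIntegrable hk
  have key : ∫ t in (-1 : ℝ)..1, ((n + 1 : ℝ) * (t ^ n * jacobiWeight k t)
      - (n + 1 + 2 * k) * (t ^ (n + 2) * jacobiWeight k t)) = 0 := by
    rw [intervalIntegral.integral_eq_sub_of_hasDerivAt_of_le (by norm_num)
      (f := fun t : ℝ => t ^ (n + 1) * ((1 - t) ^ k * (1 + t) ^ k))]
    · simp [Real.zero_rpow hk.ne']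
    · refine ContinuousOn.mul (by fun_prop) (ContinuousOn.mul ?_ ?_) <;>
      exact ContinuousOn.rpow_const (by fun_prop) (fun _ _ => Or.inr hk.le)
    · intro t ht
      have h1 : 0 < 1 - t := by linarith [ht.2]
      have h2 : 0 < 1 + t := by linarith [ht.1]
      have d1 := ((hasDerivAt_id t).const_sub 1).rpow_const (p := k) (Or.inl h1.ne')
      have d2 := ((hasDerivAt_id t).const_add 1).rpow_const (p := k) (Or.inl h2.ne')
      refine ((hasDerivAt_pow (n + 1) t).mul (d1.mul d2)).congr_deriv ?_
      simp only [id, Pi.mul_apply, jacobiWeight, rpow_eq_rpow_sub_one_mul hk h1.le,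
        rpow_eq_rpow_sub_one_mul hk h2.le, Nat.add_sub_cancel]
      push_cast
      ring
    · exact ((hI n).const_mul _).sub ((hI (n + 2)).const_mul _)
  rw [intervalIntegral.integral_sub ((hI n).const_mul _) ((hI (n + 2)).const_mul _),
    intervalIntegral.integral_const_mul, intervalIntegral.integral_const_mul] at key
  unfold jacobiMoment
  linarith

/-- The recurrence satisfied by the moments `mₙ = Gₙ + Gₙ₊₁` of the weight of `χ`. -/
lemma dunklMoment_recurrence {k : ℝ} (hk : 0 < k) (n : ℕ) :
    ((n + 1 : ℝ) + k * (1 - (-1) ^ (n + 1))) * (jacobiMoment k (n + 1) + jacobiMoment k (n + 2)) =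
      (n + 1) * (jacobiMoment k n + jacobiMoment k (n + 1)) := by
  rcases Nat.even_or_odd n with hn | hn
  · have h1 := jacobiMoment_recurrence hk n
    rw [jacobiMoment_odd k hn.add_one, hn.add_one.neg_one_pow]
    linarith
  · have h2 : Odd (n + 2) := by
      simpa [Nat.odd_add] using hn
    rw [jacobiMoment_odd k hn, jacobiMoment_odd k h2, hn.add_one.neg_one_pow]
    ring

lemma dunkl_integrand_eq {k : ℝ} (hk : 0 < k) (f : Polynomial ℝ) (x : ℝ) {t : ℝ}
    (ht : t ∈ Set.uIcc (-1 : ℝ) 1) :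
    f.eval (x * t) * (1 - t) ^ (k - 1) * (1 + t) ^ k =
      (f.eval (x * t) * (1 + t)) * jacobiWeight k t := by
  rw [Set.uIcc_of_le (by norm_num)] at ht
  rw [rpow_eq_rpow_sub_one_mul hk (show 0 ≤ 1 + t by linarith [ht.1]), jacobiWeight]
  ring

lemma dunklInt_add {k : ℝ} (hk : 0 < k) (f g : Polynomial ℝ) (x : ℝ) :
    dunklInt k (f + g) x = dunklInt k f x + dunklInt k g x := by
  have hI (p : Polynomial ℝ) :
      IntervalIntegrable (fun t : ℝ => (p.eval (x * t) * (1 + t)) * jacobiWeight k t)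
        volume (-1) 1 :=
    (jacobiWeight_intervalIntegrable hk).continuousOn_mul (by fun_prop)
  unfold dunklInt
  simp only [intervalIntegral.integral_congr (fun _ ht => dunkl_integrand_eq hk _ x ht)]
  rw [← intervalIntegral.integral_add (hI f) (hI g)]
  congr 1
  ext t
  rw [eval_add]
  ring

lemma dunklInt_monomial {k : ℝ} (hk : 0 < k) (n : ℕ) (a x : ℝ) :
    dunklInt k (monomial n a) x = a * x ^ n * (jacobiMoment k n + jacobiMoment k (n + 1)) := by
  have hI := pow_mul_jacobiWeight_intervalIntegrable hk
  unfold dunklInt jacobiMoment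
  rw [intervalIntegral.integral_congr (fun _ ht => dunkl_integrand_eq hk _ x ht),
    ← intervalIntegral.integral_add (hI n) (hI (n + 1)), ← intervalIntegral.integral_const_mul]
  congr 1
  ext t
  rw [eval_monomial]
  ring

/-- The intertwining relation without the normalizing constant, by linearity from monomials. -/
lemma dunklInt_intertwines {k : ℝ} (hk : 0 < k) (f : Polynomial ℝ) {x : ℝ} (hx : x ≠ 0) :
    ∃ D, HasDerivAt (dunklInt k f) D x ∧
      D + k * (dunklInt k f x - dunklInt k f (-x)) / x = dunklInt k (derivative f) x := by
  induction f using Polynomial.induction_on' with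
  | add p q hp hq =>
    obtain ⟨D, hD, hD'⟩ := hp
    obtain ⟨E, hE, hE'⟩ := hq
    refine ⟨D + E, ?_, ?_⟩
    · rw [show dunklInt k (p + q) = dunklInt k p + dunklInt k q from
        funext (dunklInt_add hk p q)]
      exact hD.add hE
    · rw [derivative_add, dunklInt_add hk, dunklInt_add hk, dunklInt_add hk, ← hD', ← hE']
      ring
  | monomial n a =>
    have hD : HasDerivAt (dunklInt k (monomial n a)) (a * (n * x ^ (n - 1)) *
        (jacobiMoment k n + jacobiMoment k (n + 1))) x := by
      rw [funext (dunklInt_monomial hk n a)]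
      exact ((hasDerivAt_pow n x).const_mul a).mul_const _
    refine ⟨_, hD, ?_⟩
    · rw [derivative_monomial, dunklInt_monomial hk, dunklInt_monomial hk, dunklInt_monomial hk]
      cases n with
      | zero => simp
      | succ n =>
        have h := dunklMoment_recurrence hk n
        rw [neg_pow x]
        simp only [Nat.add_sub_cancel]
        push_cast
        field_simp
        linear_combination (a * x ^ (n + 1)) * h

/-- For `k > 0`, the operator `χ` intertwines the one-variable Dunkl operator `T`
with ordinary differentiation on polynomial functions: for every polynomial `f`
and every `x ≠ 0`, `χ(f)` is differentiable at `x` and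
`(χ f)'(x) + k (χ f (x) - χ f (-x))/x = χ(f')(x)`. -/
theorem dunkl_chi_intertwines (k : ℝ) (hk : 0 < k) (f : Polynomial ℝ) (x : ℝ) (hx : x ≠ 0) :
    DifferentiableAt ℝ (dunklChi k fun y => f.eval y) x ∧
      deriv (dunklChi k fun y => f.eval y) x +
          k * ((dunklChi k fun y => f.eval y) x - (dunklChi k fun y => f.eval y) (-x)) / x =
        (dunklChi k fun y => (derivative f).eval y) x := by
  obtain ⟨D, hD, hD'⟩ := dunklInt_intertwines hk f hx
  have h : HasDerivAt (dunklChi k fun y => f.eval y) (dunklAlpha k * D) x :=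
    hD.const_mul (dunklAlpha k)
  refine ⟨h.differentiableAt, ?_⟩
  rw [h.deriv]
  change dunklAlpha k * D + k * (dunklAlpha k * dunklInt k f x
    - dunklAlpha k * dunklInt k f (-x)) / x = dunklAlpha k * dunklInt k (derivative f) x
  rw [← hD']
  ring
end

section
/- Let k > 0 and λ ∈ ℝ, and set f_λ(x) = α·∫_{−1}^{1} exp(λxt)·(1−t)^{k−1}·(1+t)^{k} dt (= χ applied to x ↦ exp(λx)). Then: (a) f_λ(0) = 1, f_λ is differentiable, and f_λ'(x) + k·(f_λ(x) − f_λ(−x))/x = λ·f_λ(x) for every x ≠ 0; (b) f_λ is the unique solution among absolutely convergent power series: if (aₙ) is a sequence of reals with ∑ₙ |aₙ| < ∞ such that f(x) = ∑_{n≥0} aₙxⁿ satisfies f(0) = 1 and f'(x) + k·(f(x) − f(−x))/x = λ·f(x) for all x ∈ (−1,1) with x ≠ 0, then f(x) = f_λ(x) for all x ∈ (−1,1). -/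
/-!
Write `w(t) = (1-t)^(k-1) (1+t)^k`.

Existence. Differentiation under the integral sign gives
`f_λ'(x) - λ f_λ(x) = -α λ ∫ e^{λxt} (1-t) w(t) dt`, while the substitution `t ↦ -t` gives
`f_λ(x) - f_λ(-x) = α ∫ e^{λxt} (w(t) - w(-t)) dt`. Since
`d/dt [(1-t)^k (1+t)^k] = -k (w(t) - w(-t))` and `(1-t)^k (1+t)^k = (1-t) w(t)` vanishes at `±1`,
integration by parts (`dunklWeight_parts`) shows that
`k (f_λ(x) - f_λ(-x)) = α λ x ∫ e^{λxt} (1-t) w(t) dt`, and the eigenvalue equation follows.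

Uniqueness. No comparison of coefficients is needed: any solution `g` of `T g = λ g` on `(-1,1)`
that is differentiable with `g(0) = 0` vanishes (`dunkl_solution_eq_zero`). Indeed the energy
`E(x) = g(x)² + g(-x)²` satisfies, for `x > 0`,
`E' = 2λ (g(x)² - g(-x)²) - 2k (g(x) - g(-x))² / x ≤ 2|λ| E`,
so `e^{-2|λ|x} E(x)` is nonincreasing on `[0,1)`, and it starts at `0`. This is applied to the
difference of the power series and `f_λ`.
-/

open Polynomial intervalIntegral

/-- `f_λ(x) = α ∫_{-1}^{1} exp(λ x t) (1-t)^(k-1) (1+t)^k dt`, i.e. `χ` applied to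
`x ↦ exp (λ x)`. -/
noncomputable def dunklBessel (k lam : ℝ) (x : ℝ) : ℝ :=
  dunklAlpha k * ∫ t in (-1 : ℝ)..1, Real.exp (lam * (x * t)) * (1 - t) ^ (k - 1) * (1 + t) ^ k

open MeasureTheory Set

/-- The weight `w(t) = (1-t)^(k-1) (1+t)^k` on `[-1,1]`. -/
noncomputable def dunklWeight (k t : ℝ) : ℝ := (1 - t) ^ (k - 1) * (1 + t) ^ k

lemma dunklWeight_integrable {k : ℝ} (hk : 0 < k) :
    IntervalIntegrable (dunklWeight k) volume (-1) 1 := by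
  have h1 : IntervalIntegrable (fun t : ℝ => (1 - t) ^ (k - 1)) volume (-1) 1 := by
    have h := (intervalIntegral.intervalIntegrable_rpow' (a := 2) (b := 0) (r := k - 1) (by linarith)).comp_sub_left 1
    norm_num at h
    exact h
  refine h1.mul_continuousOn (g := fun t : ℝ => (1 + t) ^ k) ?_
  exact (Continuous.rpow_const (by fun_prop) fun _ => Or.inr hk.le).continuousOn

lemma dunklWeight_neg_integrable {k : ℝ} (hk : 0 < k) :
    IntervalIntegrable (fun t => dunklWeight k (-t)) volume (-1) 1 := by
  have h := (dunklWeight_integrable hk).comp_sub_left 0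
  simp only [zero_sub, neg_neg] at h
  exact h.symm

lemma dunklWeight_integral_pos {k : ℝ} (hk : 0 < k) :
    0 < ∫ t in (-1 : ℝ)..1, dunklWeight k t := by
  refine intervalIntegral.intervalIntegral_pos_of_pos_on (dunklWeight_integrable hk) ?_ (by norm_num)
  rintro t ⟨h1, h2⟩
  exact mul_pos (Real.rpow_pos_of_pos (by linarith) _) (Real.rpow_pos_of_pos (by linarith) _)

lemma dunklBessel_eq (k lam x : ℝ) :
    dunklBessel k lam x =
      dunklAlpha k * ∫ t in (-1 : ℝ)..1, Real.exp (lam * (x * t)) * dunklWeight k t := by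
  simp only [dunklBessel, dunklWeight, mul_assoc]

lemma dunklBessel_zero {k : ℝ} (hk : 0 < k) (lam : ℝ) : dunklBessel k lam 0 = 1 := by
  have h : dunklAlpha k = (∫ t in (-1 : ℝ)..1, dunklWeight k t)⁻¹ := rfl
  rw [dunklBessel_eq, h]
  simpa using inv_mul_cancel₀ (dunklWeight_integral_pos hk).ne'

lemma dunklBessel_hasDerivAt {k : ℝ} (hk : 0 < k) (lam x : ℝ) :
    HasDerivAt (dunklBessel k lam)
      (dunklAlpha k *
        ∫ t in (-1 : ℝ)..1, lam * t * Real.exp (lam * (x * t)) * dunklWeight k t) x := by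
  have hw := dunklWeight_integrable hk
  have hF : ∀ y : ℝ, IntervalIntegrable
      (fun t => Real.exp (lam * (y * t)) * dunklWeight k t) volume (-1) 1 := fun y =>
    hw.continuousOn_mul (f := dunklWeight k) (Continuous.continuousOn (by fun_prop))
  have hF' : IntervalIntegrable
      (fun t => lam * t * Real.exp (lam * (x * t)) * dunklWeight k t) volume (-1) 1 :=
    hw.continuousOn_mul (f := dunklWeight k) (Continuous.continuousOn (by fun_prop))
  have key := (intervalIntegral.hasDerivAt_integral_of_dominated_loc_of_deriv_le
    (μ := volume) (a := -1) (b := 1) (x₀ := x) (s := Metric.ball x 1)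
    (F := fun y t => Real.exp (lam * (y * t)) * dunklWeight k t)
    (F' := fun y t => lam * t * Real.exp (lam * (y * t)) * dunklWeight k t)
    (bound := fun t => |lam| * Real.exp (|lam| * (|x| + 1)) * |dunklWeight k t|)
    (Metric.ball_mem_nhds x one_pos)
    (Filter.Eventually.of_forall fun y => (intervalIntegrable_iff.mp (hF y)).aestronglyMeasurable)
    (hF x) (intervalIntegrable_iff.mp hF').aestronglyMeasurable ?_ (hw.abs.const_mul _) ?_).2
  · have h := key.const_mul (dunklAlpha k)
    have e : dunklBessel k lam = fun y => dunklAlpha k *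
        ∫ t in (-1 : ℝ)..1, Real.exp (lam * (y * t)) * dunklWeight k t :=
      funext (dunklBessel_eq k lam)
    rw [e]
    exact h
  · refine Filter.Eventually.of_forall fun t ht y hy => ?_
    rw [uIoc_of_le (by norm_num)] at ht
    have ht1 : |t| ≤ 1 := abs_le.mpr ⟨ht.1.le, ht.2⟩
    have hy1 : |y| ≤ |x| + 1 := by
      rw [Metric.mem_ball, Real.dist_eq] at hy
      have := abs_sub_abs_le_abs_sub y x
      linarith
    have h2 : lam * (y * t) ≤ |lam| * (|x| + 1) := by
      refine (le_abs_self _).trans ?_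
      rw [abs_mul, abs_mul]
      refine mul_le_mul_of_nonneg_left ?_ (abs_nonneg _)
      nlinarith [abs_nonneg y, abs_nonneg t]
    simp only [Real.norm_eq_abs, abs_mul, Real.abs_exp]
    refine mul_le_mul_of_nonneg_right ?_ (abs_nonneg _)
    refine mul_le_mul ?_ (Real.exp_le_exp.mpr h2) (Real.exp_pos _).le (abs_nonneg _)
    exact mul_le_of_le_one_right (abs_nonneg _) ht1
  · refine Filter.Eventually.of_forall fun t _ y _ => ?_
    have h : HasDerivAt (fun y : ℝ => lam * (y * t)) (lam * t) y := by
      simpa using ((hasDerivAt_id y).mul_const t).const_mul lam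
    refine (h.exp.mul_const (dunklWeight k t)).congr_deriv ?_
    ring

/-- Integration by parts against `(1-t)^k (1+t)^k`, which vanishes at both endpoints. -/
lemma dunklWeight_parts {k : ℝ} (hk : 0 < k) (c : ℝ) :
    c * ∫ t in (-1 : ℝ)..1, Real.exp (c * t) * ((1 - t) * dunklWeight k t) =
      k * ((∫ t in (-1 : ℝ)..1, Real.exp (c * t) * dunklWeight k t) -
        ∫ t in (-1 : ℝ)..1, Real.exp (c * t) * dunklWeight k (-t)) := by
  have i1 : IntervalIntegrable
      (fun t => Real.exp (c * t) * ((1 - t) * dunklWeight k t)) volume (-1) 1 :=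
    ((dunklWeight_integrable hk).continuousOn_mul
      (Continuous.continuousOn (by fun_prop : Continuous fun t : ℝ => 1 - t))).continuousOn_mul
      (Continuous.continuousOn (by fun_prop : Continuous fun t : ℝ => Real.exp (c * t)))
  have i2 : IntervalIntegrable (fun t => Real.exp (c * t) * dunklWeight k t) volume (-1) 1 :=
    (dunklWeight_integrable hk).continuousOn_mul
      (Continuous.continuousOn (by fun_prop : Continuous fun t : ℝ => Real.exp (c * t)))
  have i3 : IntervalIntegrable (fun t => Real.exp (c * t) * dunklWeight k (-t)) volume (-1) 1 :=
    (dunklWeight_neg_integrable hk).continuousOn_mul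
      (Continuous.continuousOn (by fun_prop : Continuous fun t : ℝ => Real.exp (c * t)))
  have ftc := intervalIntegral.integral_eq_sub_of_hasDerivAt_of_le
    (a := -1) (b := 1) (f := fun t : ℝ => Real.exp (c * t) * ((1 - t) ^ k * (1 + t) ^ k))
    (f' := fun t => c * (Real.exp (c * t) * ((1 - t) * dunklWeight k t)) -
      k * (Real.exp (c * t) * dunklWeight k t - Real.exp (c * t) * dunklWeight k (-t)))
    (by norm_num) ?_ ?_ ((i1.const_mul c).sub ((i2.sub i3).const_mul k))
  · rw [intervalIntegral.integral_sub (i1.const_mul c) ((i2.sub i3).const_mul k),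
      intervalIntegral.integral_const_mul, intervalIntegral.integral_const_mul,
      intervalIntegral.integral_sub i2 i3] at ftc
    simp [Real.zero_rpow hk.ne'] at ftc
    linarith
  · refine Continuous.continuousOn (Continuous.mul (by fun_prop) (Continuous.mul ?_ ?_))
    · exact Continuous.rpow_const (by fun_prop) fun _ => Or.inr hk.le
    · exact Continuous.rpow_const (by fun_prop) fun _ => Or.inr hk.le
  · rintro t ⟨h1, h2⟩
    have p1 : (0 : ℝ) < 1 - t := by linarith
    have p2 : (0 : ℝ) < 1 + t := by linarith
    have d0 : HasDerivAt (fun t : ℝ => Real.exp (c * t)) (Real.exp (c * t) * c) t := by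
      simpa using ((hasDerivAt_id t).const_mul c).exp
    have d1 : HasDerivAt (fun t : ℝ => (1 - t) ^ k) (-1 * k * (1 - t) ^ (k - 1)) t :=
      ((hasDerivAt_id t).const_sub 1).rpow_const (Or.inl p1.ne')
    have d2 : HasDerivAt (fun t : ℝ => (1 + t) ^ k) (1 * k * (1 + t) ^ (k - 1)) t :=
      ((hasDerivAt_id t).const_add 1).rpow_const (Or.inl p2.ne')
    refine (d0.fun_mul (d1.fun_mul d2)).congr_deriv ?_
    have e1 : (1 - t) ^ k = (1 - t) * (1 - t) ^ (k - 1) := by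
      rw [Real.rpow_sub_one p1.ne']; field_simp
    simp only [dunklWeight, sub_neg_eq_add, ← sub_eq_add_neg]
    rw [e1]
    ring

lemma dunklBessel_eigen {k : ℝ} (hk : 0 < k) (lam : ℝ) {x : ℝ} (hx : x ≠ 0) :
    deriv (dunklBessel k lam) x +
        k * (dunklBessel k lam x - dunklBessel k lam (-x)) / x =
      lam * dunklBessel k lam x := by
  have hw := dunklWeight_integrable hk
  have i1 : IntervalIntegrable
      (fun t => Real.exp (lam * x * t) * ((1 - t) * dunklWeight k t)) volume (-1) 1 :=
    (hw.continuousOn_mul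
      (Continuous.continuousOn (by fun_prop : Continuous fun t : ℝ => 1 - t))).continuousOn_mul
      (Continuous.continuousOn (by fun_prop : Continuous fun t : ℝ => Real.exp (lam * x * t)))
  have i2 : IntervalIntegrable (fun t => Real.exp (lam * x * t) * dunklWeight k t)
      volume (-1) 1 :=
    hw.continuousOn_mul
      (Continuous.continuousOn (by fun_prop : Continuous fun t : ℝ => Real.exp (lam * x * t)))
  have parts := dunklWeight_parts hk (lam * x)
  have hpos : dunklBessel k lam x =
      dunklAlpha k * ∫ t in (-1 : ℝ)..1, Real.exp (lam * x * t) * dunklWeight k t := by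
    simp only [dunklBessel_eq, mul_assoc]
  have hneg : dunklBessel k lam (-x) =
      dunklAlpha k * ∫ t in (-1 : ℝ)..1, Real.exp (lam * x * t) * dunklWeight k (-t) := by
    have h := intervalIntegral.integral_comp_neg (a := -1) (b := 1)
      (fun t => Real.exp (lam * (-x * t)) * dunklWeight k t)
    rw [neg_neg] at h
    rw [dunklBessel_eq, ← h]
    simp only [neg_mul_neg, mul_assoc]
  have hder : deriv (dunklBessel k lam) x = dunklAlpha k *
      (lam * ((∫ t in (-1 : ℝ)..1, Real.exp (lam * x * t) * dunklWeight k t) -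
        ∫ t in (-1 : ℝ)..1, Real.exp (lam * x * t) * ((1 - t) * dunklWeight k t))) := by
    rw [(dunklBessel_hasDerivAt hk lam x).deriv, ← intervalIntegral.integral_sub i2 i1,
      ← intervalIntegral.integral_const_mul lam]
    congr 1
    refine intervalIntegral.integral_congr fun t _ => ?_
    simp only [← mul_assoc]
    ring
  rw [hder, hneg, hpos, ← mul_sub, mul_left_comm k, ← parts]
  field_simp
  ring

/-- The initial value problem `T g = λ g`, `g(0) = 0` on `(-1,1)` has only the zero solution; the
energy `g(x)² + g(-x)²` grows at most like `e^{2|λ|x}` on `[0,1)`. -/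
lemma dunkl_solution_eq_zero {k : ℝ} (hk : 0 < k) (lam : ℝ) {g : ℝ → ℝ}
    (hd : ∀ x ∈ Ioo (-1 : ℝ) 1, DifferentiableAt ℝ g x) (h0 : g 0 = 0)
    (heq : ∀ x ∈ Ioo (-1 : ℝ) 1, x ≠ 0 → deriv g x + k * (g x - g (-x)) / x = lam * g x) :
    ∀ x ∈ Ioo (-1 : ℝ) 1, g x = 0 := by
  have hder : ∀ x ∈ Ico (0 : ℝ) 1, HasDerivAt
      (fun y => Real.exp (-2 * |lam| * y) * (g y ^ 2 + g (-y) ^ 2))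
      (Real.exp (-2 * |lam| * x) * (-2 * |lam| * (g x ^ 2 + g (-x) ^ 2) +
        (2 * g x * deriv g x - 2 * g (-x) * deriv g (-x)))) x := by
    rintro x ⟨h1, h2⟩
    have d0 : HasDerivAt (fun y : ℝ => Real.exp (-2 * |lam| * y))
        (Real.exp (-2 * |lam| * x) * (-2 * |lam|)) x := by
      simpa using ((hasDerivAt_id x).const_mul (-2 * |lam|)).exp
    have d1 := (hd x ⟨by linarith, h2⟩).hasDerivAt
    have d2 : HasDerivAt (fun y => g (-y)) (deriv g (-x) * (-1)) x :=
      HasDerivAt.comp x (hd (-x) ⟨by linarith, by linarith⟩).hasDerivAt (hasDerivAt_neg x)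
    refine (d0.fun_mul ((d1.fun_pow 2).fun_add (d2.fun_pow 2))).congr_deriv ?_
    simp
    ring
  have hanti : AntitoneOn (fun y => Real.exp (-2 * |lam| * y) * (g y ^ 2 + g (-y) ^ 2))
      (Ico (0 : ℝ) 1) := by
    refine antitoneOn_of_deriv_nonpos (convex_Ico 0 1)
      (fun x hx => (hder x hx).continuousAt.continuousWithinAt) ?_ ?_
    · exact fun x hx => (hder x (interior_subset hx)).differentiableAt.differentiableWithinAt
    · intro x hx
      rw [(hder x (interior_subset hx)).deriv]
      rw [interior_Ico] at hx
      obtain ⟨hx0, hx1⟩ := hx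
      refine mul_nonpos_of_nonneg_of_nonpos (Real.exp_pos _).le ?_
      have e1 := heq x ⟨by linarith, hx1⟩ hx0.ne'
      have e2 := heq (-x) ⟨by linarith, by linarith⟩ (neg_ne_zero.mpr hx0.ne')
      have f1 : deriv g x = lam * g x - k * (g x - g (-x)) / x := by linarith
      have f2 : deriv g (-x) = lam * g (-x) - k * (g x - g (-x)) / x := by
        rw [neg_neg, div_neg] at e2
        have : k * (g (-x) - g x) / x = -(k * (g x - g (-x)) / x) := by ring
        linarith
      have e3 : 2 * g x * deriv g x - 2 * g (-x) * deriv g (-x) =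
          2 * (lam * g x ^ 2 - lam * g (-x) ^ 2) - 2 * (k * (g x - g (-x)) ^ 2 / x) := by
        rw [f1, f2]; ring
      have e4 : 0 ≤ k * (g x - g (-x)) ^ 2 / x := by positivity
      rw [e3]
      nlinarith [mul_nonneg (sub_nonneg.mpr (le_abs_self lam)) (sq_nonneg (g x)),
        mul_nonneg (sub_nonneg.mpr (neg_abs_le lam)) (sq_nonneg (g (-x)))]
  have hE : ∀ x ∈ Ico (0 : ℝ) 1, g x = 0 ∧ g (-x) = 0 := by
    intro x hx
    have h := hanti ⟨le_refl 0, one_pos⟩ hx hx.1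
    simp only [neg_zero, h0] at h
    have h' : g x ^ 2 + g (-x) ^ 2 ≤ 0 := by
      by_contra hc
      have := mul_pos (Real.exp_pos (-2 * |lam| * x)) (not_le.mp hc)
      norm_num at h this
      linarith
    constructor <;> nlinarith [sq_nonneg (g x), sq_nonneg (g (-x))]
  rintro x ⟨h1, h2⟩
  rcases le_total 0 x with h | h
  · exact (hE x ⟨h, h2⟩).1
  · simpa using (hE (-x) ⟨by linarith, by linarith⟩).2

lemma powerSeries_differentiableAt {a : ℕ → ℝ} (ha : Summable fun n => |a n|) {x : ℝ}
    (hx : x ∈ Ioo (-1 : ℝ) 1) : DifferentiableAt ℝ (fun y : ℝ => ∑' n : ℕ, a n * y ^ n) x := by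
  obtain ⟨r, hr1, hr2⟩ := exists_between (abs_lt.mpr hx)
  have hr0 : 0 < r := (abs_nonneg x).trans_lt hr1
  -- `|aₙ| ≤ ∑ |aⱼ|`, so the derived terms are dominated on `|y| < r` by a multiple of `n rⁿ / r`.
  have hu : Summable fun n : ℕ => (∑' j, |a j|) * ((n : ℝ) ^ 1 * r ^ n / r) := by
    have h : Summable fun n : ℕ => (n : ℝ) ^ 1 * r ^ n :=
      summable_pow_mul_geometric_of_norm_lt_one 1 (by rwa [Real.norm_eq_abs, abs_of_pos hr0])
    exact (h.div_const r).mul_left _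
  refine (hasDerivAt_tsum_of_isPreconnected (g := fun n y => a n * y ^ n)
    (g' := fun n y => a n * (n * y ^ (n - 1))) (t := Ioo (-r) r) (y₀ := 0)
    hu isOpen_Ioo isPreconnected_Ioo (fun n y _ => (hasDerivAt_pow n y).const_mul (a n)) ?_
    ⟨by linarith, hr0⟩ ?_ (abs_lt.mp hr1)).differentiableAt
  · intro n y hy
    rw [norm_mul, Real.norm_eq_abs]
    refine mul_le_mul (ha.le_tsum n fun j _ => abs_nonneg _) ?_ (norm_nonneg _)
      (tsum_nonneg fun j => abs_nonneg _)
    rcases n with _ | n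
    · simp
    · have h : |y| ^ n ≤ r ^ n := pow_le_pow_left₀ (abs_nonneg y) (abs_lt.mpr hy).le n
      have e : ((n + 1 : ℕ) : ℝ) ^ 1 * r ^ (n + 1) / r = ((n + 1 : ℕ) : ℝ) * r ^ n := by
        rw [pow_one, pow_succ]; field_simp
      rw [e, norm_mul, norm_pow, Real.norm_natCast, Real.norm_eq_abs]
      exact mul_le_mul_of_nonneg_left h (Nat.cast_nonneg _)
  · refine summable_of_ne_finset_zero (s := {0}) fun n hn => ?_
    rw [zero_pow (by simpa using hn), mul_zero]

/-- For `k > 0` and `λ ∈ ℝ`: (a) `f_λ = χ(exp(λ·))` satisfies `f_λ(0) = 1`, is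
differentiable, and solves `T f = λ f` away from `0`; (b) it is the unique such
solution among absolutely convergent power series on `(-1, 1)`. -/
theorem dunkl_eigenfunction (k : ℝ) (hk : 0 < k) (lam : ℝ) :
    (dunklBessel k lam 0 = 1 ∧ Differentiable ℝ (dunklBessel k lam) ∧
      ∀ x : ℝ, x ≠ 0 →
        deriv (dunklBessel k lam) x +
            k * (dunklBessel k lam x - dunklBessel k lam (-x)) / x =
          lam * dunklBessel k lam x) ∧
    ∀ a : ℕ → ℝ, Summable (fun n => |a n|) →
      (∑' n : ℕ, a n * (0 : ℝ) ^ n) = 1 →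
      (∀ x ∈ Set.Ioo (-1 : ℝ) 1, x ≠ 0 →
        deriv (fun y : ℝ => ∑' n : ℕ, a n * y ^ n) x +
            k * ((∑' n : ℕ, a n * x ^ n) - ∑' n : ℕ, a n * (-x) ^ n) / x =
          lam * ∑' n : ℕ, a n * x ^ n) →
      ∀ x ∈ Set.Ioo (-1 : ℝ) 1, (∑' n : ℕ, a n * x ^ n) = dunklBessel k lam x := by
  refine ⟨⟨dunklBessel_zero hk lam, fun x => (dunklBessel_hasDerivAt hk lam x).differentiableAt,
    fun x hx => dunklBessel_eigen hk lam hx⟩, ?_⟩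
  intro a ha h0 heq x hx
  refine sub_eq_zero.mp (dunkl_solution_eq_zero hk lam
    (g := fun y => (∑' n : ℕ, a n * y ^ n) - dunklBessel k lam y) ?_ ?_ ?_ x hx)
  · exact fun y hy => (powerSeries_differentiableAt ha hy).sub
      (dunklBessel_hasDerivAt hk lam y).differentiableAt
  · simp only [h0, dunklBessel_zero hk lam, sub_self]
  · intro y hy hy0
    rw [deriv_fun_sub (powerSeries_differentiableAt ha hy)
      (dunklBessel_hasDerivAt hk lam y).differentiableAt]
    have e1 := heq y hy hy0
    have e2 := dunklBessel_eigen hk lam hy0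
    linear_combination e1 - e2
end

section
/- The only ℂ-linear subspaces of ℂ[X] stable under the three operators x, s and T are 0 and ℂ[X] if and only if c ∉ 1/2 + ℤ_{≥0}; i.e. the standard module Δ(ℂ) = ℂ[X] of the type-A₁ rational Cherednik algebra H_{1,c} is irreducible if and only if c is not of the form 1/2 + m with m a nonnegative integer. -/
open Polynomial

/-!
On monomials, `T X ^ n = (n + c ((-1) ^ n - 1)) X ^ (n - 1)`, and the scalar in front is `n` for `n`
even and `n - 2 c` for `n` odd (`coeff_cherednikT`).

If `c` is not of the form `1/2 + m`, these scalars are nonzero for all `n > 0`, so `T` lowers the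
degree by exactly one. A nonzero polynomial of least degree in a stable subspace is therefore
constant, and multiplication by `X` then generates all of `ℂ[X]`. If `c = 1/2 + m`, then `T` kills
`X ^ (2 m + 1)`, and the ideal generated by this monomial is a proper nonzero stable subspace.
-/

/-- The involution `s` of `ℂ[X]` determined by `X ↦ -X`. -/
noncomputable def cherednikS (f : Polynomial ℂ) : Polynomial ℂ := f.comp (-X)

/-- The one-variable Dunkl operator `T f = f' + c g`, where `g` is the unique
polynomial with `X g = s(f) - f`. -/
noncomputable def cherednikT (c : ℂ) (f : Polynomial ℂ) : Polynomial ℂ :=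
  derivative f + C c * ((cherednikS f - f) /ₘ X)

/-- The scalar `n + c ((-1) ^ n - 1)` by which `T` maps `X ^ n` to a multiple of `X ^ (n - 1)`. -/
noncomputable def dunklFactor (c : ℂ) (n : ℕ) : ℂ := n + c * ((-1) ^ n - 1)

lemma coeff_divByMonic_X_eq (p : Polynomial ℂ) (n : ℕ) : (p /ₘ X).coeff n = p.coeff (n + 1) := by
  have h := congrArg (fun q => coeff q (n + 1)) (modByMonic_add_div p (X : Polynomial ℂ))
  simpa [modByMonic_X, coeff_C_succ] using h

lemma coeff_cherednikS (f : Polynomial ℂ) (n : ℕ) :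
    (cherednikS f).coeff n = (-1) ^ n * f.coeff n := by
  have h : (-X : Polynomial ℂ) = C (-1) * X := by simp
  rw [cherednikS, h, comp_C_mul_X_coeff, mul_comm]

lemma coeff_cherednikT (c : ℂ) (f : Polynomial ℂ) (n : ℕ) :
    (cherednikT c f).coeff n = dunklFactor c (n + 1) * f.coeff (n + 1) := by
  simp only [cherednikT, coeff_add, coeff_derivative, coeff_C_mul, coeff_divByMonic_X_eq,
    coeff_sub, coeff_cherednikS, dunklFactor]
  push_cast
  ring

lemma dunklFactor_ne_zero {c : ℂ} (hc : ¬∃ m : ℕ, c = 1/2 + (m : ℂ)) (n : ℕ) :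
    dunklFactor c (n + 1) ≠ 0 := by
  intro h
  rcases Nat.even_or_odd (n + 1) with he | ho
  · rw [dunklFactor, he.neg_one_pow] at h
    have : ((n + 1 : ℕ) : ℂ) = 0 := by simpa using h
    exact Nat.succ_ne_zero n (by exact_mod_cast this)
  · rw [dunklFactor, ho.neg_one_pow] at h
    obtain ⟨m, hm⟩ := ho
    rw [hm] at h
    push_cast at h
    exact hc ⟨m, by linear_combination (-1 / 2) * h⟩

/-- The subspace of polynomials vanishing to order at least `N` at the origin, that is, the
ideal generated by `X ^ N`. -/
def lowCoeffZero (N : ℕ) : Submodule ℂ (Polynomial ℂ) where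
  carrier := {f | ∀ k < N, f.coeff k = 0}
  add_mem' := by
    intro a b ha hb k hk
    simp [ha k hk, hb k hk]
  zero_mem' := by simp
  smul_mem' := by
    intro r a ha k hk
    simp [ha k hk]

/-- The standard module `Δ(ℂ) = ℂ[X]` of the type `A₁` rational Cherednik algebra
`H_{1,c}` is irreducible (the only subspaces stable under `x`, `s` and `T` are `0`
and `ℂ[X]`) if and only if `c ∉ 1/2 + ℤ_{≥0}`. -/
theorem polyRep_irreducible_iff (c : ℂ) :
    (∀ M : Submodule ℂ (Polynomial ℂ),
      (∀ f ∈ M, X * f ∈ M) → (∀ f ∈ M, cherednikS f ∈ M) → (∀ f ∈ M, cherednikT c f ∈ M) →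
      M = ⊥ ∨ M = ⊤) ↔ ¬∃ m : ℕ, c = 1/2 + (m : ℂ) := by
  constructor
  · rintro h ⟨m, rfl⟩
    refine (h (lowCoeffZero (2 * m + 1)) ?_ ?_ ?_).elim (fun h0 => ?_) (fun h1 => ?_)
    · intro f hf k hk
      cases k with
      | zero => simp
      | succ k => simpa using hf k (by lia)
    · intro f hf k hk
      rw [coeff_cherednikS, hf k hk, mul_zero]
    · intro f hf k hk
      rw [coeff_cherednikT]
      rcases Nat.lt_or_ge (k + 1) (2 * m + 1) with hlt | hge
      · rw [hf _ hlt, mul_zero]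
      · -- The only coefficient that could leave the ideal comes from `X ^ (2 m + 1)`,
        -- where the scalar is `2 m + 1 - 2 c = 0`.
        obtain rfl : k = 2 * m := by lia
        have : dunklFactor (1/2 + (m : ℂ)) (2 * m + 1) = 0 := by
          rw [dunklFactor, Odd.neg_one_pow ⟨m, rfl⟩]
          push_cast
          ring
        rw [this, zero_mul]
    · have hX : (X ^ (2 * m + 1) : Polynomial ℂ) ∈ lowCoeffZero (2 * m + 1) := by
        intro k hk
        simp [coeff_X_pow, hk.ne]
      rw [h0, Submodule.mem_bot] at hX
      exact pow_ne_zero _ X_ne_zero hX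
    · have h1' : (1 : Polynomial ℂ) ∈ lowCoeffZero (2 * m + 1) := h1 ▸ Submodule.mem_top
      simpa using h1' 0 (Nat.succ_pos _)
  · intro hc M hx _ hT
    refine or_iff_not_imp_left.mpr fun hM => ?_
    -- Repeated application of `T` brings any nonzero element down to a nonzero constant.
    have key : ∀ d : ℕ, ∀ f ∈ M, f ≠ 0 → f.natDegree = d → (1 : Polynomial ℂ) ∈ M := by
      intro d
      induction d with
      | zero =>
        intro f hf hf0 hd
        rw [eq_C_of_natDegree_eq_zero hd] at hf hf0
        have ha : f.coeff 0 ≠ 0 := fun h => hf0 (by rw [h, C_0])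
        have := M.smul_mem (f.coeff 0)⁻¹ hf
        rwa [smul_C, smul_eq_mul, inv_mul_cancel₀ ha, C_1] at this
      | succ d ih =>
        intro f hf hf0 hd
        have hne : (cherednikT c f).coeff d ≠ 0 := by
          rw [coeff_cherednikT, ← hd]
          refine mul_ne_zero ?_ (leadingCoeff_ne_zero.mpr hf0)
          rw [hd]
          exact dunklFactor_ne_zero hc d
        refine ih _ (hT f hf) (fun h => hne (by rw [h, coeff_zero])) ?_
        refine le_antisymm (natDegree_le_iff_coeff_eq_zero.mpr fun k hk => ?_)
          (le_natDegree_of_ne_zero hne)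
        rw [coeff_cherednikT, coeff_eq_zero_of_natDegree_lt (by lia), mul_zero]
    obtain ⟨f, hf, hf0⟩ := M.ne_bot_iff.mp hM
    have h1 := key _ f hf hf0 rfl
    have hpow : ∀ n : ℕ, (X ^ n : Polynomial ℂ) ∈ M := by
      intro n
      induction n with
      | zero => simpa using h1
      | succ n ih => simpa [pow_succ'] using hx _ ih
    refine eq_top_iff.mpr fun p _ => ?_
    rw [p.as_sum_range_C_mul_X_pow]
    exact M.sum_mem fun i _ => by simpa [smul_eq_C_mul] using M.smul_mem (p.coeff i) (hpow i)
end

section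
/- The images in H_{t,c} of the monomials x^a·ξ^b and x^a·s·ξ^b, for a, b ∈ ℕ, form a ℂ-basis of H_{t,c} (PBW theorem / triangular decomposition H_{t,c} ≅ ℂ[x] ⊗ ℂ[ℤ/2] ⊗ ℂ[ξ] in type A₁). -/
/-!
Spanning: the span of the monomials `x^a s^e ξ^b` contains `1` and is stable under left
multiplication by `s`, `x` and `ξ`. The only relation that is not immediate is
`ξ x^a = x^a ξ + t a x^(a-1) - c (1 - (-1)^a) x^(a-1) s`, proved by induction on `a`.

Linear independence: the formulas for left multiplication on monomials define operators on the
free vector space with basis `(a, e, b)`. These operators satisfy the defining relations, so they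
give a representation of `H_{t,c}`. Acting on the basis vector `(0, 0, 0)`, the monomial
`x^a s^e ξ^b` yields the basis vector `(a, e, b)`, so the monomials are independent.
-/

open FreeAlgebra

/-- The defining relations of the rational Cherednik algebra `H_{t,c}` of type `A₁`,
on the free algebra on three generators `s = ι 0`, `x = ι 1`, `ξ = ι 2`:
`s² - 1`, `s x + x s`, `s ξ + ξ s` and `ξ x - x ξ - t 1 + 2 c s`. -/
inductive CherednikRel (t c : ℂ) : FreeAlgebra ℂ (Fin 3) → FreeAlgebra ℂ (Fin 3) → Prop
  | s_sq : CherednikRel t c (ι ℂ (0 : Fin 3) * ι ℂ (0 : Fin 3) - 1) 0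
  | s_x : CherednikRel t c (ι ℂ (0 : Fin 3) * ι ℂ (1 : Fin 3) + ι ℂ (1 : Fin 3) * ι ℂ (0 : Fin 3)) 0
  | s_xi : CherednikRel t c (ι ℂ (0 : Fin 3) * ι ℂ (2 : Fin 3) + ι ℂ (2 : Fin 3) * ι ℂ (0 : Fin 3)) 0
  | xi_x : CherednikRel t c
      (ι ℂ (2 : Fin 3) * ι ℂ (1 : Fin 3) - ι ℂ (1 : Fin 3) * ι ℂ (2 : Fin 3) -
        algebraMap ℂ (FreeAlgebra ℂ (Fin 3)) t + (2 * c) • ι ℂ (0 : Fin 3)) 0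

/-- The rational Cherednik algebra `H_{t,c}` of type `A₁`. -/
abbrev CherednikA1 (t c : ℂ) := RingQuot (CherednikRel t c)

/-- The generator `s` of `H_{t,c}`. -/
noncomputable def CherednikA1.S (t c : ℂ) : CherednikA1 t c :=
  RingQuot.mkAlgHom ℂ (CherednikRel t c) (ι ℂ (0 : Fin 3))

/-- The generator `x` of `H_{t,c}`. -/
noncomputable def CherednikA1.x (t c : ℂ) : CherednikA1 t c :=
  RingQuot.mkAlgHom ℂ (CherednikRel t c) (ι ℂ (1 : Fin 3))

/-- The generator `ξ` of `H_{t,c}`. -/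
noncomputable def CherednikA1.xi (t c : ℂ) : CherednikA1 t c :=
  RingQuot.mkAlgHom ℂ (CherednikRel t c) (ι ℂ (2 : Fin 3))

namespace CherednikA1

/-- The vector space with basis the symbols `(a, e, b)`, standing for `x^a s^e ξ^b`. -/
abbrev PBWSpace := (ℕ × Bool × ℕ) →₀ ℂ

/-- The basis vector standing for `x^a s^e ξ^b`. -/
noncomputable abbrev vec (a : ℕ) (e : Bool) (b : ℕ) : PBWSpace := Finsupp.single (a, e, b) 1

/-- The sign by which `s^e` and `ξ` commute. -/
def sgn (e : Bool) : ℂ := if e then -1 else 1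

/-- Left multiplication by `s`: `s x^a s^e ξ^b = (-1)^a x^a s^(e+1) ξ^b`. -/
noncomputable def opS : Module.End ℂ PBWSpace :=
  Finsupp.linearCombination ℂ fun p => (-1 : ℂ) ^ p.1 • vec p.1 (!p.2.1) p.2.2

/-- Left multiplication by `x`. -/
noncomputable def opX : Module.End ℂ PBWSpace :=
  Finsupp.linearCombination ℂ fun p => vec (p.1 + 1) p.2.1 p.2.2

/-- Left multiplication by `ξ`. For `a = 0` the truncated exponent `a - 1` is harmless, since both
coefficients `t a` and `c (1 - (-1)^a)` vanish. -/
noncomputable def opXi (t c : ℂ) : Module.End ℂ PBWSpace :=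
  Finsupp.linearCombination ℂ fun p =>
    sgn p.2.1 • vec p.1 p.2.1 (p.2.2 + 1) + (t * p.1) • vec (p.1 - 1) p.2.1 p.2.2
      - (c * (1 - (-1) ^ p.1)) • vec (p.1 - 1) (!p.2.1) p.2.2

lemma opS_vec (a : ℕ) (e : Bool) (b : ℕ) : opS (vec a e b) = (-1 : ℂ) ^ a • vec a (!e) b := by
  simp [opS]

lemma opX_vec (a : ℕ) (e : Bool) (b : ℕ) : opX (vec a e b) = vec (a + 1) e b := by
  simp [opX]

lemma opXi_vec (t c : ℂ) (a : ℕ) (e : Bool) (b : ℕ) :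
    opXi t c (vec a e b) = sgn e • vec a e (b + 1) + (t * a) • vec (a - 1) e b
      - (c * (1 - (-1) ^ a)) • vec (a - 1) (!e) b := by
  rw [opXi, Finsupp.linearCombination_single, one_smul]

lemma end_ext {f g : Module.End ℂ PBWSpace} (h : ∀ a e b, f (vec a e b) = g (vec a e b)) :
    f = g := by
  refine Finsupp.lhom_ext' fun p => LinearMap.ext_ring ?_
  exact h p.1 p.2.1 p.2.2

lemma sgn_not (e : Bool) : sgn (!e) = -sgn e := by cases e <;> simp [sgn]

lemma opS_sq : opS * opS = 1 := by
  refine end_ext fun a e b => ?_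
  simp only [Module.End.mul_apply, opS_vec, map_smul, smul_smul, Bool.not_not, ← mul_pow]
  simp

lemma opS_opX : opS * opX + opX * opS = 0 := by
  refine end_ext fun a e b => ?_
  simp only [Module.End.mul_apply, LinearMap.add_apply, opS_vec, opX_vec, map_smul,
    LinearMap.zero_apply]
  module

lemma opS_opXi (t c : ℂ) : opS * opXi t c + opXi t c * opS = 0 := by
  refine end_ext fun a e b => ?_
  rcases a with _ | a <;>
  · simp only [Module.End.mul_apply, LinearMap.add_apply, opS_vec, opXi_vec, map_smul,
      LinearMap.zero_apply, map_add, map_sub, sgn_not, Bool.not_not, Nat.add_sub_cancel,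
      Nat.cast_zero, pow_zero, Nat.cast_succ]
    module

lemma opXi_opX (t c : ℂ) :
    opXi t c * opX - opX * opXi t c - algebraMap ℂ _ t + (2 * c) • opS = 0 := by
  refine end_ext fun a e b => ?_
  rcases a with _ | a <;>
  · simp only [Module.End.mul_apply, LinearMap.add_apply, LinearMap.sub_apply,
      LinearMap.smul_apply, Module.algebraMap_end_apply, opS_vec, opX_vec, opXi_vec, map_smul,
      LinearMap.zero_apply, map_add, map_sub, Nat.add_sub_cancel,
      Nat.cast_zero, pow_zero, Nat.cast_succ]
    module

/-- The representation of `H_{t,c}` on `PBWSpace`, a model of its left regular representation. -/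
noncomputable def rep (t c : ℂ) : CherednikA1 t c →ₐ[ℂ] Module.End ℂ PBWSpace :=
  RingQuot.liftAlgHom ℂ ⟨FreeAlgebra.lift ℂ ![opS, opX, opXi t c], by
    rintro _ _ (_ | _ | _ | _)
    · simp [opS_sq]
    · simpa using opS_opX
    · simpa using opS_opXi t c
    · simpa using opXi_opX t c⟩

lemma rep_S (t c : ℂ) : rep t c (S t c) = opS := by simp [rep, S]

lemma rep_x (t c : ℂ) : rep t c (x t c) = opX := by simp [rep, x]

lemma rep_xi (t c : ℂ) : rep t c (xi t c) = opXi t c := by simp [rep, xi]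

/-- The PBW monomial `x^a s^e ξ^b`. -/
noncomputable def mono (t c : ℂ) (p : ℕ × Bool × ℕ) : CherednikA1 t c :=
  x t c ^ p.1 * (if p.2.1 then S t c else 1) * xi t c ^ p.2.2

lemma opXi_pow_vec (t c : ℂ) (b : ℕ) : (opXi t c ^ b) (vec 0 false 0) = vec 0 false b := by
  induction b with
  | zero => simp
  | succ b ih => rw [pow_succ', Module.End.mul_apply, ih, opXi_vec]; simp [sgn]

lemma opX_pow_vec (a : ℕ) (e : Bool) (b : ℕ) : (opX ^ a) (vec 0 e b) = vec a e b := by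
  induction a with
  | zero => simp
  | succ a ih => rw [pow_succ', Module.End.mul_apply, ih, opX_vec]

lemma rep_mono (t c : ℂ) (p : ℕ × Bool × ℕ) :
    rep t c (mono t c p) (vec 0 false 0) = Finsupp.single p 1 := by
  obtain ⟨a, e, b⟩ := p
  simp only [mono, map_mul, map_pow, rep_x, rep_xi, Module.End.mul_apply, opXi_pow_vec]
  cases e
  · simpa using opX_pow_vec a false b
  · rw [if_pos rfl, rep_S, opS_vec, pow_zero, one_smul]
    exact opX_pow_vec a true b

lemma linearIndependent_mono (t c : ℂ) : LinearIndependent ℂ (mono t c) := by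
  refine LinearIndependent.of_comp
    ((LinearMap.applyₗ (vec 0 false 0)) ∘ₗ (rep t c).toLinearMap) ?_
  convert (Finsupp.basisSingleOne (R := ℂ) (ι := ℕ × Bool × ℕ)).linearIndependent using 1
  ext1 p
  simpa using rep_mono t c p

lemma S_sq (t c : ℂ) : S t c * S t c = 1 := by
  have h := RingQuot.mkAlgHom_rel ℂ (CherednikRel.s_sq (t := t) (c := c))
  simp only [map_sub, map_mul, map_one, map_zero] at h
  exact sub_eq_zero.mp h

lemma S_x (t c : ℂ) : S t c * x t c = (-1 : ℂ) • (x t c * S t c) := by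
  have h := RingQuot.mkAlgHom_rel ℂ (CherednikRel.s_x (t := t) (c := c))
  simp only [map_add, map_mul, map_zero] at h
  exact (eq_neg_of_add_eq_zero_left h).trans (neg_one_smul ℂ _).symm

lemma xi_S (t c : ℂ) : xi t c * S t c = (-1 : ℂ) • (S t c * xi t c) := by
  have h := RingQuot.mkAlgHom_rel ℂ (CherednikRel.s_xi (t := t) (c := c))
  simp only [map_add, map_mul, map_zero] at h
  exact (eq_neg_of_add_eq_zero_right h).trans (neg_one_smul ℂ _).symm

lemma xi_x (t c : ℂ) :
    xi t c * x t c = x t c * xi t c + t • 1 - (2 * c) • S t c := by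
  have h := RingQuot.mkAlgHom_rel ℂ (CherednikRel.xi_x (t := t) (c := c))
  simp only [map_add, map_sub, map_mul, map_zero, map_smul, map_one,
    Algebra.algebraMap_eq_smul_one] at h
  change xi t c * x t c - x t c * xi t c - t • 1 + (2 * c) • S t c = 0 at h
  rw [← sub_eq_zero, ← h]
  abel

lemma S_x_pow (t c : ℂ) (a : ℕ) : S t c * x t c ^ a = (-1 : ℂ) ^ a • (x t c ^ a * S t c) := by
  induction a with
  | zero => simp
  | succ a ih =>
    rw [pow_succ, ← mul_assoc, ih, smul_mul_assoc, mul_assoc, S_x, mul_smul_comm, ← mul_assoc, pow_succ]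
    module

lemma xi_x_pow (t c : ℂ) (a : ℕ) :
    xi t c * x t c ^ a = x t c ^ a * xi t c + (t * a) • x t c ^ (a - 1)
      - (c * (1 - (-1) ^ a)) • (x t c ^ (a - 1) * S t c) := by
  induction a with
  | zero => simp
  | succ a ih =>
    -- `x * x^(a-1) = x^a` fails only for `a = 0`, where the coefficients vanish
    have h1 : (t * a) • (x t c * x t c ^ (a - 1)) = (t * a) • x t c ^ a := by
      cases a <;> simp [pow_succ']
    have h2 : (c * (1 - (-1) ^ a)) • (x t c * (x t c ^ (a - 1) * S t c))
        = (c * (1 - (-1) ^ a)) • (x t c ^ a * S t c) := by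
      cases a <;> simp [pow_succ', mul_assoc]
    have h3 : xi t c * x t c ^ (a + 1) = x t c * (xi t c * x t c ^ a) + t • x t c ^ a
        - (2 * c) • (S t c * x t c ^ a) := by
      rw [pow_succ', ← mul_assoc, xi_x]
      simp only [add_mul, sub_mul, smul_mul_assoc, one_mul, mul_assoc]
    rw [h3, ih, mul_sub, mul_add, mul_smul_comm, mul_smul_comm, h1, h2, S_x_pow,
      Nat.add_sub_cancel, ← mul_assoc, ← pow_succ', Nat.cast_succ]
    module

lemma S_mul_mono (t c : ℂ) (a : ℕ) (e : Bool) (b : ℕ) :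
    S t c * mono t c (a, e, b) = (-1 : ℂ) ^ a • mono t c (a, !e, b) := by
  simp only [mono]
  rw [← mul_assoc, ← mul_assoc, S_x_pow, smul_mul_assoc, smul_mul_assoc]
  cases e
  · simp
  · simp [mul_assoc (x t c ^ a), S_sq]

lemma x_mul_mono (t c : ℂ) (a : ℕ) (e : Bool) (b : ℕ) :
    x t c * mono t c (a, e, b) = mono t c (a + 1, e, b) := by
  simp only [mono, pow_succ', mul_assoc]

lemma xi_mul_mono (t c : ℂ) (a : ℕ) (e : Bool) (b : ℕ) :
    xi t c * mono t c (a, e, b) = sgn e • mono t c (a, e, b + 1)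
      + (t * a) • mono t c (a - 1, e, b)
      - (c * (1 - (-1) ^ a)) • mono t c (a - 1, !e, b) := by
  simp only [mono]
  rw [← mul_assoc, ← mul_assoc, xi_x_pow]
  simp only [add_mul, sub_mul, smul_mul_assoc]
  cases e
  · simp [sgn, pow_succ', mul_assoc]
  · have h : x t c ^ a * xi t c * S t c * xi t c ^ b
        = (-1 : ℂ) • (x t c ^ a * S t c * xi t c ^ (b + 1)) := by
      rw [mul_assoc (x t c ^ a), xi_S, pow_succ', mul_smul_comm, smul_mul_assoc]
      simp only [mul_assoc]
    simp [sgn, h, mul_assoc (x t c ^ (a - 1)), S_sq]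

lemma gen_mul_mono_mem (t c : ℂ) (i : Fin 3) (p : ℕ × Bool × ℕ) :
    RingQuot.mkAlgHom ℂ (CherednikRel t c) (FreeAlgebra.ι ℂ i) * mono t c p
      ∈ Submodule.span ℂ (Set.range (mono t c)) := by
  have hm (q) : mono t c q ∈ Submodule.span ℂ (Set.range (mono t c)) :=
    Submodule.subset_span ⟨q, rfl⟩
  obtain ⟨a, e, b⟩ := p
  fin_cases i
  · change S t c * _ ∈ _
    rw [S_mul_mono]
    exact Submodule.smul_mem _ _ (hm _)
  · change x t c * _ ∈ _
    rw [x_mul_mono]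
    exact hm _
  · change xi t c * _ ∈ _
    rw [xi_mul_mono]
    exact Submodule.sub_mem _ (Submodule.add_mem _ (Submodule.smul_mem _ _ (hm _))
      (Submodule.smul_mem _ _ (hm _))) (Submodule.smul_mem _ _ (hm _))

lemma span_mono (t c : ℂ) : Submodule.span ℂ (Set.range (mono t c)) = ⊤ := by
  -- the span is a left ideal, and it contains `1`
  have key (h : FreeAlgebra ℂ (Fin 3)) : ∀ m ∈ Submodule.span ℂ (Set.range (mono t c)),
      RingQuot.mkAlgHom ℂ (CherednikRel t c) h * m
        ∈ Submodule.span ℂ (Set.range (mono t c)) := by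
    induction h using FreeAlgebra.induction with
    | grade0 r =>
      intro m hm
      rw [AlgHom.commutes, ← Algebra.smul_def]
      exact Submodule.smul_mem _ _ hm
    | grade1 i =>
      intro m hm
      induction hm using Submodule.span_induction with
      | mem m hm =>
        obtain ⟨p, rfl⟩ := hm
        exact gen_mul_mono_mem t c i p
      | zero => simp
      | add u v _ _ hu hv => rw [mul_add]; exact Submodule.add_mem _ hu hv
      | smul r u _ hu => rw [mul_smul_comm]; exact Submodule.smul_mem _ _ hu
    | mul f g hf hg =>
      intro m hm
      rw [map_mul, mul_assoc]
      exact hf _ (hg _ hm)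
    | add f g hf hg =>
      intro m hm
      rw [map_add, add_mul]
      exact Submodule.add_mem _ (hf _ hm) (hg _ hm)
  refine eq_top_iff.mpr fun y _ => ?_
  obtain ⟨h, rfl⟩ := RingQuot.mkAlgHom_surjective ℂ (CherednikRel t c) y
  have h1 : mono t c (0, false, 0) = 1 := by simp [mono]
  simpa [h1] using key h _ (Submodule.subset_span ⟨(0, false, 0), rfl⟩)

end CherednikA1

/-- PBW theorem for the type `A₁` rational Cherednik algebra: the monomials
`x^a ξ^b` and `x^a s ξ^b` (`a, b ∈ ℕ`) form a ℂ-basis of `H_{t,c}`. -/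
theorem cherednikA1_pbw (t c : ℂ) :
    LinearIndependent ℂ
      (fun p : ℕ × Bool × ℕ =>
        CherednikA1.x t c ^ p.1 * (if p.2.1 then CherednikA1.S t c else 1) *
          CherednikA1.xi t c ^ p.2.2) ∧
    Submodule.span ℂ
        (Set.range fun p : ℕ × Bool × ℕ =>
          CherednikA1.x t c ^ p.1 * (if p.2.1 then CherednikA1.S t c else 1) *
            CherednikA1.xi t c ^ p.2.2) = ⊤ :=
  ⟨CherednikA1.linearIndependent_mono t c, CherednikA1.span_mono t c⟩
end

section
/- Let e = (1/2)(1 + s) (the symmetrizing operator on ℂ[X]), and define the ℂ-linear endomorphisms of ℂ[X]: U = (1/2)·e ∘ x² ∘ e, V = −(1/2)·e ∘ T² ∘ e, and W = e ∘ x ∘ T ∘ e. Then W ∘ W − (1 + 2c)·W = −4·U ∘ V, U ∘ V − V ∘ U = W + (1/2 − c)·e, V ∘ W − W ∘ V = 2·V, and U ∘ W − W ∘ U = −2·U. (These are the defining relations of the spherical subalgebra B_{1,c} = e·H_{1,c}·e of type A₁, realized in the Dunkl representation.) -/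
/-!
The image of `e` is the space of even polynomials, so every `e F` has the form `g(X²)`, written
`expand ℂ 2 g`. On such polynomials the Dunkl operator is explicit:
`T (g(X²)) = 2 X g'(X²)` and `T (X h(X²)) = (h + 2 X h' - 2 c h)(X²)`.
In the variable `Y = X²` the three operators therefore become
`U = Y / 2`, `V = -(2 Y ∂² + (1 - 2c) ∂)` and `W = 2 Y ∂`,
and the four relations are identities between differential operators in `Y`, which follow from
the Leibniz rule.
-/

open Polynomial

/-- The multiplication operator `x : f ↦ X f` on `ℂ[X]`. -/
noncomputable def cherednikX (f : Polynomial ℂ) : Polynomial ℂ := X * f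

/-- The symmetrizer `e = (1/2)(1 + s)` on `ℂ[X]`. -/
noncomputable def cherednikE (f : Polynomial ℂ) : Polynomial ℂ :=
  (1/2 : ℂ) • (f + cherednikS f)

lemma cherednikS_expand (g : ℂ[X]) : cherednikS (expand ℂ 2 g) = expand ℂ 2 g := by
  rw [cherednikS, expand_eq_comp_X_pow, comp_assoc]
  simp

lemma cherednikS_X_mul_expand (g : ℂ[X]) :
    cherednikS (X * expand ℂ 2 g) = -(X * expand ℂ 2 g) := by
  have h := cherednikS_expand g
  simp only [cherednikS] at h ⊢
  rw [mul_comp, h]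
  simp

lemma cherednikE_expand (g : ℂ[X]) : cherednikE (expand ℂ 2 g) = expand ℂ 2 g := by
  rw [cherednikE, cherednikS_expand, ← two_smul ℂ, smul_smul]
  norm_num

/-- The image of `e` consists of even polynomials, i.e. polynomials in `X²`. -/
lemma exists_cherednikE_eq_expand (F : ℂ[X]) : ∃ g : ℂ[X], cherednikE F = expand ℂ 2 g := by
  induction F using Polynomial.induction_on' with
  | add p q hp hq =>
    obtain ⟨a, ha⟩ := hp
    obtain ⟨b, hb⟩ := hq
    refine ⟨a + b, ?_⟩
    rw [map_add, ← ha, ← hb]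
    simp only [cherednikE, cherednikS, add_comp, smul_add]
    ring
  | monomial n a =>
    rcases Nat.even_or_odd' n with ⟨k, rfl | rfl⟩
    · refine ⟨C a * X ^ k, ?_⟩
      rw [← cherednikE_expand]
      simp [← C_mul_X_pow_eq_monomial, pow_mul]
    · refine ⟨0, ?_⟩
      have h := cherednikS_X_mul_expand (C a * X ^ k)
      have h2 : monomial (2 * k + 1) a = X * expand ℂ 2 (C a * X ^ k) := by
        simp [← C_mul_X_pow_eq_monomial, pow_mul, pow_succ]
        ring
      rw [cherednikE, h2, h]
      simp

lemma X_mul_divByMonic_X (p : ℂ[X]) : (X * p) /ₘ X = p :=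
  mul_divByMonic_cancel_left p monic_X

lemma cherednikT_expand (c : ℂ) (g : ℂ[X]) :
    cherednikT c (expand ℂ 2 g) = X * expand ℂ 2 (2 * derivative g) := by
  rw [cherednikT, cherednikS_expand, derivative_expand]
  simp [map_ofNat]
  ring

lemma cherednikT_X_mul_expand (c : ℂ) (h : ℂ[X]) :
    cherednikT c (X * expand ℂ 2 h) =
      expand ℂ 2 (h + 2 * X * derivative h - 2 * C c * h) := by
  have h1 : -(X * expand ℂ 2 h) - X * expand ℂ 2 h = X * (-2 * expand ℂ 2 h) := by ring
  rw [cherednikT, cherednikS_X_mul_expand, h1, X_mul_divByMonic_X, derivative_mul,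
    derivative_expand]
  simp [map_ofNat]
  ring

/-- The defining relations of the spherical subalgebra `B_{1,c} = e H_{1,c} e`
of type `A₁`, realized in the Dunkl representation: with
`U = (1/2) e x² e`, `V = -(1/2) e T² e`, `W = e x T e`, one has
`W² - (1+2c) W = -4 U V`, `[U,V] = W + (1/2 - c) e`, `[V,W] = 2V`, `[U,W] = -2U`. -/
theorem spherical_relations_A1 (c : ℂ)
    (U V W : Polynomial ℂ → Polynomial ℂ)
    (hU : U = (1/2 : ℂ) • (cherednikE ∘ cherednikX ∘ cherednikX ∘ cherednikE))
    (hV : V = (-(1/2) : ℂ) • (cherednikE ∘ cherednikT c ∘ cherednikT c ∘ cherednikE))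
    (hW : W = cherednikE ∘ cherednikX ∘ cherednikT c ∘ cherednikE) :
    W ∘ W - ((1 : ℂ) + 2 * c) • W = (-(4 : ℂ)) • (U ∘ V) ∧
    U ∘ V - V ∘ U = W + ((1/2 : ℂ) - c) • cherednikE ∧
    V ∘ W - W ∘ V = (2 : ℂ) • V ∧
    U ∘ W - W ∘ U = (-(2 : ℂ)) • U := by
  have xx (g : ℂ[X]) : X * (X * expand ℂ 2 g) = expand ℂ 2 (X * g) := by
    simp
    ring
  have smulE (a : ℂ) (g : ℂ[X]) : a • expand ℂ 2 g = expand ℂ 2 (C a * g) := by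
    rw [map_mul, expand_C, smul_eq_C_mul]
  -- `U`, `V`, `W` factor through `e`, so their values depend only on `g` with `e F = g(X²)`.
  have uE {F g : ℂ[X]} (h : cherednikE F = expand ℂ 2 g) :
      U F = expand ℂ 2 (C (1/2) * (X * g)) := by
    simp only [hU, Pi.smul_apply, Function.comp_apply, h, cherednikX, xx, cherednikE_expand, smulE]
  have vE {F g : ℂ[X]} (h : cherednikE F = expand ℂ 2 g) :
      V F = expand ℂ 2 (C (-(1/2)) * (2 * derivative g + 2 * X * derivative (2 * derivative g)
        - 2 * C c * (2 * derivative g))) := by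
    simp only [hV, Pi.smul_apply, Function.comp_apply, h, cherednikT_expand,
      cherednikT_X_mul_expand, cherednikE_expand, smulE]
  have wE {F g : ℂ[X]} (h : cherednikE F = expand ℂ 2 g) :
      W F = expand ℂ 2 (X * (2 * derivative g)) := by
    simp only [hW, Function.comp_apply, h, cherednikX, cherednikT_expand, xx, cherednikE_expand]
  have d2 : derivative (2 : ℂ[X]) = 0 := derivative_ofNat 2
  have half : (2 : ℂ[X]) * C (1/2) = 1 := by
    rw [← C_ofNat, ← C_mul]
    norm_num
  refine ⟨?_, ?_, ?_, ?_⟩ <;> funext F <;>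
    obtain ⟨g, hg⟩ := exists_cherednikE_eq_expand F <;>
    simp only [Pi.sub_apply, Pi.add_apply, Pi.smul_apply, Function.comp_apply, uE hg, vE hg,
      wE hg, uE (cherednikE_expand _), vE (cherednikE_expand _), wE (cherednikE_expand _), hg,
      smulE, ← map_sub, ← map_add] <;>
    congr 1 <;>
    simp only [derivative_mul, derivative_add, derivative_sub, derivative_X, derivative_C, d2,
      derivative_zero, derivative_one, derivative_neg,
      C_neg, C_add, C_sub, C_mul, C_1, C_ofNat] <;>
    clear uE vE wE smulE xx hU hV hW hg <;>
    grind
end
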